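/- arXiv:1006.1523 — 3 statements merged into one kernel-verified Lean document; each statement's English description precedes it below -/
import Mathlib

section
/- Let μ = N(0, Q) be a centered nondegenerate Gaussian measure on a separable Hilbert space H with covariance Q having eigenvalues λ_k with eigenvectors e_k, and let 0 ≤ α ≤ 1. Then for every φ in the Sobolev space W^{1,2}_α(H, μ), the Poincaré inequality ∫_H (φ − φ̄)² dμ ≤ λ₁^α ∫_H |Q^{(1−α)/2}Dφ|² dμ holds, where φ̄ = ∫_H φ dμ and λ₁ is the largest eigenvalue of Q. -/
open MeasureTheory Filter
open scoped RealInnerProductSpace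

/-!
Let `X`, `Y` be independent with law `μ`. By rotation invariance of centered Gaussian measures,
`X_θ = cos θ • X + sin θ • Y` and `X_{θ + π/2}` are again independent with law `μ`, for every `θ`.
The function `f θ = φ (X_θ)` is `2π`-periodic with `f' θ = Dφ(X_θ) X_{θ + π/2}`, and Parseval
together with `|exp(i n τ) - 1| ≤ |n| |exp(i τ) - 1|` gives, at `τ = π/2`, the sharp bound
`∫ |f(θ + π/2) - f θ|² dθ ≤ 2 ∫ |f' θ|² dθ` over a period. Taking expectations,
`2 Var φ(X) = E |φ(Y) - φ(X)|² ≤ 2 E |Dφ(X) Y|² = 2 E ⟨Q Dφ(X), Dφ(X)⟩`,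
and `λ_k ≤ λ₁^α λ_k^(1 - α)` concludes. All integrals are taken in `[0, ∞]`, so that
square integrability of `φ` is a by-product.
-/

namespace GaussianPoincare

open ProbabilityTheory AddCircle
open scoped ENNReal NNReal Real

theorem enorm_sq_eq_ofReal_norm_sq {E : Type*} [NormedAddCommGroup E] (z : E) :
    ‖z‖ₑ ^ 2 = ENNReal.ofReal (‖z‖ ^ 2) := by
  rw [ENNReal.ofReal_pow (norm_nonneg z), ofReal_norm]

section Circle

theorem norm_zpow_sub_one_le {𝕜 : Type*} [NormedDivisionRing 𝕜] {z : 𝕜} (hz : ‖z‖ = 1) (n : ℤ) :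
    ‖z ^ n - 1‖ ≤ |(n : ℝ)| * ‖z - 1‖ := by
  have norm_pow_sub_one_le (m : ℕ) : ‖z ^ m - 1‖ ≤ m * ‖z - 1‖ := by
    rw [← geom_sum_mul, norm_mul]
    gcongr
    simpa [hz] using norm_sum_le (Finset.range m) (z ^ ·)
  obtain ⟨m, rfl | rfl⟩ := n.eq_nat_or_neg
  · simpa using norm_pow_sub_one_le m
  · have hz0 : z ≠ 0 := norm_ne_zero_iff.mp (by simp [hz])
    calc ‖z ^ (-(m : ℤ)) - 1‖ = ‖z ^ m * (z ^ (-(m : ℤ)) - 1)‖ := by simp [hz]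
      _ = ‖z ^ m - 1‖ := by simp [mul_sub, hz0, norm_sub_rev]
      _ ≤ |((-(m : ℤ) : ℤ) : ℝ)| * ‖z - 1‖ := by simpa using norm_pow_sub_one_le m

variable {T : ℝ}

theorem norm_fourier_sub_one_le (n : ℤ) (τ : AddCircle T) :
    ‖fourier n τ - 1‖ ≤ |(n : ℝ)| * ‖fourier 1 τ - 1‖ := by
  have hpow : fourier n τ = fourier 1 τ ^ n := by simp [fourier_apply, toCircle_zsmul]
  rw [hpow]
  exact norm_zpow_sub_one_le (by rw [fourier_apply, Circle.norm_coe]) n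

theorem norm_fourier_one_coe_sub_one (τ : ℝ) :
    ‖fourier 1 (τ : AddCircle T) - 1‖ = 2 * |Real.sin (π * τ / T)| := by
  have hexp : fourier 1 (τ : AddCircle T) = Complex.exp (Complex.I * (2 * π * τ / T : ℝ)) := by
    rw [fourier_coe_apply]
    congr 1
    push_cast
    ring
  have hhalf : 2 * π * τ / T / 2 = π * τ / T := by ring
  rw [hexp, Complex.norm_exp_I_mul_ofReal_sub_one, hhalf, norm_mul, Real.norm_ofNat,
    Real.norm_eq_abs]

theorem periodic_of_hasDerivAt {E : Type*} [NormedAddCommGroup E] [NormedSpace ℝ E]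
    {f f' : ℝ → E} (hf : ∀ x, HasDerivAt f (f' x) x) (hfT : Function.Periodic f T) :
    Function.Periodic f' T := fun x => by
  have hshift : HasDerivAt (fun y => f (y + T)) (f' (x + T)) x := (hf (x + T)).comp_add_const x T
  simp only [hfT _] at hshift
  exact hshift.unique (hf x)

variable {f f' : AddCircle T → ℂ}

theorem continuous_of_hasDerivAt (hf : ∀ x : ℝ, HasDerivAt (fun y : ℝ => f y) (f' x) x) :
    Continuous f := by
  apply QuotientAddGroup.isQuotientMap_mk _ |>.continuous_iff.mpr
  exact continuous_iff_continuousAt.mpr fun x => (hf x).continuousAt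

variable [hT : Fact (0 < T)]

theorem fourierCoeff_comp_add_right {E : Type*} [NormedAddCommGroup E] [NormedSpace ℂ E]
    (f : AddCircle T → E) (τ : AddCircle T) (n : ℤ) :
    fourierCoeff (fun t => f (t + τ)) n = fourier n τ • fourierCoeff f n := by
  have hshift (t : AddCircle T) : fourier (-n) t = fourier n τ * fourier (-n) (t + τ) := by
    simp only [fourier_apply, ← Circle.coe_mul, ← toCircle_add]
    congr 3
    module
  calc fourierCoeff (fun t => f (t + τ)) n
      = ∫ t, fourier n τ • fourier (-n) (t + τ) • f (t + τ) ∂haarAddCircle := by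
        simp_rw [smul_smul, ← hshift, fourierCoeff]
    _ = fourier n τ • fourierCoeff f n := by
        rw [integral_smul, integral_add_right_eq_self (fun t => fourier (-n) t • f t) τ,
          fourierCoeff]

theorem tsum_enorm_fourierCoeff_sq {f : AddCircle T → ℂ} (hf : MemLp f 2 haarAddCircle) :
    ∑' n, ‖fourierCoeff f n‖ₑ ^ 2 = ∫⁻ t, ‖f t‖ₑ ^ 2 ∂haarAddCircle := by
  have hparseval := hasSum_sq_fourierCoeff hf.toLp
  have hnorm : ∀ᵐ t ∂haarAddCircle, ‖hf.toLp f t‖ ^ 2 = ‖f t‖ ^ 2 :=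
    hf.coeFn_toLp.mono fun t ht => by rw [ht]
  rw [fourierCoeff_congr_ae hf.coeFn_toLp, integral_congr_ae hnorm] at hparseval
  simp_rw [enorm_sq_eq_ofReal_norm_sq]
  rw [← ENNReal.ofReal_tsum_of_nonneg (fun n => sq_nonneg _) hparseval.summable, hparseval.tsum_eq,
    ofReal_integral_eq_lintegral_ofReal hf.integrable_norm_pow' (ae_of_all _ fun t => sq_nonneg _)]

theorem fourierCoeff_of_hasDerivAt (hf : ∀ x : ℝ, HasDerivAt (fun y : ℝ => f y) (f' x) x)
    (hf' : Continuous f') (n : ℤ) :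
    fourierCoeff f' n = 2 * π * Complex.I * n / T * fourierCoeff f n := by
  have hparts := intervalIntegral.integral_mul_deriv_eq_deriv_mul (a := 0) (b := T)
    (fun x _ => hasDerivAt_fourier_neg T n x) (fun x _ => hf x)
    (Continuous.intervalIntegrable (by fun_prop) _ _)
    (Continuous.intervalIntegrable (by fun_prop) _ _)
  simp only [coe_period, QuotientAddGroup.mk_zero, sub_self, zero_sub, mul_assoc,
    intervalIntegral.integral_const_mul] at hparts
  simp only [fourierCoeff_eq_intervalIntegral _ n 0, zero_add, smul_eq_mul, hparts,
    Complex.real_smul]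
  ring

theorem norm_fourierCoeff_shift_sub_le
    (hf : ∀ x : ℝ, HasDerivAt (fun y : ℝ => f y) (f' x) x) (hf' : Continuous f')
    (τ : AddCircle T) (n : ℤ) :
    ‖fourierCoeff (fun t => f (t + τ) - f t) n‖
      ≤ T / (2 * π) * ‖fourier 1 τ - 1‖ * ‖fourierCoeff f' n‖ := by
  have hcont : Continuous f := continuous_of_hasDerivAt hf
  have integrable {g : AddCircle T → ℂ} (hg : Continuous g) : Integrable g haarAddCircle :=
    hg.integrable_of_hasCompactSupport (.of_compactSpace g)
  have hcoeff : fourierCoeff (fun t => f (t + τ) - f t) n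
      = (fourier n τ - 1) * fourierCoeff f n := by
    rw [sub_one_mul, ← smul_eq_mul, ← fourierCoeff_comp_add_right]
    simp_rw [fourierCoeff, smul_sub]
    exact integral_sub (integrable (by fun_prop)) (integrable (by fun_prop))
  have hderiv : ‖fourierCoeff f' n‖ = 2 * π * |(n : ℝ)| / T * ‖fourierCoeff f n‖ := by
    rw [fourierCoeff_of_hasDerivAt hf hf']
    simp [abs_of_pos hT.out, abs_of_pos Real.pi_pos]
  calc ‖fourierCoeff (fun t => f (t + τ) - f t) n‖
      = ‖fourier n τ - 1‖ * ‖fourierCoeff f n‖ := by rw [hcoeff, norm_mul]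
    _ ≤ |(n : ℝ)| * ‖fourier 1 τ - 1‖ * ‖fourierCoeff f n‖ := by
        gcongr
        exact norm_fourier_sub_one_le n τ
    _ = T / (2 * π) * ‖fourier 1 τ - 1‖ * ‖fourierCoeff f' n‖ := by
        rw [hderiv]
        field_simp [hT.out.ne']

theorem lintegral_enorm_shift_sub_sq_le (hf : ∀ x : ℝ, HasDerivAt (fun y : ℝ => f y) (f' x) x)
    (hf' : Continuous f') (τ : AddCircle T) :
    ∫⁻ t, ‖f (t + τ) - f t‖ₑ ^ 2 ∂haarAddCircle
      ≤ ENNReal.ofReal (T / (2 * π) * ‖fourier 1 τ - 1‖) ^ 2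
        * ∫⁻ t, ‖f' t‖ₑ ^ 2 ∂haarAddCircle := by
  have hcont : Continuous f := continuous_of_hasDerivAt hf
  have parseval {g : AddCircle T → ℂ} (hg : Continuous g) :
      ∑' n, ‖fourierCoeff g n‖ₑ ^ 2 = ∫⁻ t, ‖g t‖ₑ ^ 2 ∂haarAddCircle :=
    tsum_enorm_fourierCoeff_sq (hg.memLp_of_hasCompactSupport (.of_compactSpace g))
  have hT0 : 0 ≤ T := hT.out.le
  rw [← parseval (by fun_prop), ← parseval hf', ← ENNReal.tsum_mul_left]
  refine ENNReal.tsum_le_tsum fun n => ?_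
  rw [← mul_pow, ← ofReal_norm (fourierCoeff f' n), ← ENNReal.ofReal_mul (by positivity),
    ← ofReal_norm]
  gcongr
  exact norm_fourierCoeff_shift_sub_le hf hf' τ n

theorem lintegral_Ioc_eq_lintegral_haarAddCircle (g : AddCircle T → ℝ≥0∞) :
    ∫⁻ x in Set.Ioc 0 T, g x = ENNReal.ofReal T * ∫⁻ t, g t ∂haarAddCircle := by
  have := AddCircle.lintegral_preimage T 0 g
  rwa [zero_add, volume_eq_smul_haarAddCircle, lintegral_smul_measure] at this

theorem setLIntegral_enorm_shift_sub_sq_le_of_periodic {f f' : ℝ → ℂ}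
    (hfT : Function.Periodic f T) (hf : ∀ x, HasDerivAt f (f' x) x) (hf' : Continuous f') (τ : ℝ) :
    ∫⁻ x in Set.Ioc 0 T, ‖f (x + τ) - f x‖ₑ ^ 2
      ≤ ENNReal.ofReal (T / π * |Real.sin (π * τ / T)|) ^ 2
        * ∫⁻ x in Set.Ioc 0 T, ‖f' x‖ₑ ^ 2 := by
  have hf'T : Function.Periodic f' T := periodic_of_hasDerivAt hf hfT
  have hcircle := lintegral_enorm_shift_sub_sq_le (T := T) (f := hfT.lift) (f' := hf'T.lift)
    (by simpa only [Function.Periodic.lift_coe] using hf) (hf'.quotient_lift _) τ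
  have hconst : T / (2 * π) * ‖fourier 1 (τ : AddCircle T) - 1‖
      = T / π * |Real.sin (π * τ / T)| := by
    rw [norm_fourier_one_coe_sub_one]
    field_simp
  rw [hconst] at hcircle
  let increment (t : AddCircle T) : ℝ≥0∞ := ‖hfT.lift (t + (τ : AddCircle T)) - hfT.lift t‖ₑ ^ 2
  calc ∫⁻ x in Set.Ioc 0 T, ‖f (x + τ) - f x‖ₑ ^ 2
      = ∫⁻ x : ℝ in Set.Ioc 0 T, increment x := by
        simp only [increment, ← coe_add, Function.Periodic.lift_coe]
    _ = ENNReal.ofReal T * ∫⁻ t, increment t ∂haarAddCircle :=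
        lintegral_Ioc_eq_lintegral_haarAddCircle increment
    _ ≤ ENNReal.ofReal T * (ENNReal.ofReal (T / π * |Real.sin (π * τ / T)|) ^ 2
        * ∫⁻ t, ‖hf'T.lift t‖ₑ ^ 2 ∂haarAddCircle) := by gcongr
    _ = ENNReal.ofReal (T / π * |Real.sin (π * τ / T)|) ^ 2
        * ∫⁻ x in Set.Ioc 0 T, ‖f' x‖ₑ ^ 2 := by
        rw [mul_left_comm, ← lintegral_Ioc_eq_lintegral_haarAddCircle]
        simp only [Function.Periodic.lift_coe]

end Circle

section Variance

variable {Ω : Type*} {mΩ : MeasurableSpace Ω} {P : Measure Ω} [IsProbabilityMeasure P] {X : Ω → ℝ}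

theorem lintegral_enorm_sub_const_sq (hX : AEStronglyMeasurable X P) (c : ℝ) :
    ∫⁻ ω, ‖X ω - c‖ₑ ^ 2 ∂P = eVar[X; P] + ‖P[X] - c‖ₑ ^ 2 := by
  have hXc : AEStronglyMeasurable (fun ω => X ω - c) P := hX.sub aestronglyMeasurable_const
  by_cases hLp : MemLp X 2 P
  · have hXcLp : MemLp (fun ω => X ω - c) 2 P := hLp.sub (memLp_const c)
    have hmoment : ∫ ω, (X ω - c) ^ 2 ∂P = Var[X; P] + (P[X] - c) ^ 2 := by
      have hmean : ∫ ω, (X ω - c) ∂P = P[X] - c := by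
        rw [integral_sub (hLp.integrable one_le_two) (integrable_const c), integral_const,
          probReal_univ, one_smul]
      have hvar := variance_eq_sub hXcLp
      rw [variance_sub_const hX, hmean] at hvar
      simp only [Pi.pow_apply] at hvar
      linarith
    simp only [enorm_sq_eq_ofReal_norm_sq, Real.norm_eq_abs, sq_abs]
    rw [← ofReal_integral_eq_lintegral_ofReal hXcLp.integrable_sq
        (ae_of_all _ fun _ => sq_nonneg _), hmoment,
      ENNReal.ofReal_add (variance_nonneg X P) (sq_nonneg _), ofReal_variance hLp]
  · have hXcLp : ¬ MemLp (fun ω => X ω - c) 2 P := fun h => hLp <| by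
      simpa [Pi.add_def] using h.add (memLp_const c)
    have hmoment : ∫⁻ ω, ‖X ω - c‖ₑ ^ 2 ∂P = ∞ := by
      rw [eq_top_iff, ← evariance_eq_top hXc hXcLp, evariance_def' hXc]
      exact tsub_le_self
    rw [hmoment, evariance_eq_top hX hLp, top_add]

theorem lintegral_lintegral_enorm_sub_sq (hX : AEStronglyMeasurable X P) :
    ∫⁻ ω, ∫⁻ ω', ‖X ω' - X ω‖ₑ ^ 2 ∂P ∂P = 2 * eVar[X; P] := by
  simp_rw [lintegral_enorm_sub_const_sq hX, enorm_sub_rev P[X]]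
  rw [lintegral_add_left measurable_const, lintegral_const, measure_univ, mul_one, two_mul]
  rfl

end Variance

section Rotation

open ContinuousLinearMap renaming rotation → prodRotation, rotation_apply → prodRotation_apply

variable {E : Type*} [NormedAddCommGroup E] [NormedSpace ℝ E] {φ : E → ℝ}

theorem setLIntegral_rotation_le (hφ : ContDiff ℝ 1 φ) (p : E × E) :
    ∫⁻ θ in Set.Ioc 0 (2 * π), ‖φ (prodRotation θ p).2 - φ (prodRotation θ p).1‖ₑ ^ 2
      ≤ 2 * ∫⁻ θ in Set.Ioc 0 (2 * π),
          ‖fderiv ℝ φ (prodRotation θ p).1 (prodRotation θ p).2‖ₑ ^ 2 := by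
  have : Fact (0 < 2 * π) := ⟨Real.two_pi_pos⟩
  have hperiodic : Function.Periodic (fun θ : ℝ => (φ (prodRotation θ p).1 : ℂ)) (2 * π) := by
    intro θ
    simp only [prodRotation_apply, Real.cos_add_two_pi, Real.sin_add_two_pi]
  have hderiv (θ : ℝ) : HasDerivAt (fun θ : ℝ => (φ (prodRotation θ p).1 : ℂ))
      (fderiv ℝ φ (prodRotation θ p).1 (prodRotation θ p).2 : ℝ) θ := by
    have hcurve : HasDerivAt (fun θ => (prodRotation θ p).1) (prodRotation θ p).2 θ :=
      ((Real.hasDerivAt_cos θ).smul_const p.1).add ((Real.hasDerivAt_sin θ).smul_const p.2)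
    exact ((hφ.differentiable one_ne_zero _).hasFDerivAt.comp_hasDerivAt θ hcurve).ofReal_comp
  have hcont : Continuous fun θ => (fderiv ℝ φ (prodRotation θ p).1 (prodRotation θ p).2 : ℂ) := by
    have := hφ.continuous_fderiv one_ne_zero
    simp only [prodRotation_apply]
    fun_prop
  have hquarter (θ : ℝ) : (prodRotation (θ + π / 2) p).1 = (prodRotation θ p).2 := by
    simp [prodRotation_apply, Real.cos_add_pi_div_two, Real.sin_add_pi_div_two]
  have hconst : ENNReal.ofReal (2 * π / π * |Real.sin (π * (π / 2) / (2 * π))|) ^ 2 = 2 := by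
    have hangle : π * (π / 2) / (2 * π) = π / 4 := by field_simp; norm_num
    rw [hangle, Real.sin_pi_div_four, ← ENNReal.ofReal_pow (by positivity)]
    norm_num [div_pow, mul_pow]
  have hshift := setLIntegral_enorm_shift_sub_sq_le_of_periodic hperiodic hderiv hcont (π / 2)
  rw [hconst] at hshift
  simpa [hquarter, ← Complex.ofReal_sub, enorm_eq_nnnorm] using hshift

variable [SecondCountableTopology E] [MeasurableSpace E] [BorelSpace E]

theorem lintegral_lintegral_rotation {ν : Measure (E × E)} [SFinite ν]
    (hν : ∀ θ, ν.map (prodRotation θ) = ν) {F : E × E → ℝ≥0∞} (hF : Measurable F)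
    (κ : Measure ℝ) [SFinite κ] :
    ∫⁻ p, ∫⁻ θ, F (prodRotation θ p) ∂κ ∂ν = κ Set.univ * ∫⁻ p, F p ∂ν := by
  have hrotation : Continuous fun q : (E × E) × ℝ => prodRotation q.2 q.1 := by
    simp only [prodRotation_apply]
    fun_prop
  have hinvariant (θ : ℝ) : ∫⁻ p, F (prodRotation θ p) ∂ν = ∫⁻ p, F p ∂ν := by
    rw [← lintegral_map hF (prodRotation θ).measurable, hν]
  rw [lintegral_lintegral_swap (f := fun p θ => F (prodRotation θ p))
    (hF.comp hrotation.measurable).aemeasurable]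
  simp_rw [hinvariant]
  rw [lintegral_const, mul_comm]

theorem evariance_le_lintegral_enorm_fderiv_sq {μ : Measure E} [IsProbabilityMeasure μ]
    (hμ : ∀ θ, (μ.prod μ).map (prodRotation θ) = μ.prod μ) (hφ : ContDiff ℝ 1 φ) :
    eVar[φ; μ] ≤ ∫⁻ x, ∫⁻ y, ‖fderiv ℝ φ x y‖ₑ ^ 2 ∂μ ∂μ := by
  have hincrement : Measurable fun p : E × E => ‖φ p.2 - φ p.1‖ₑ ^ 2 := by
    have := hφ.continuous
    exact Continuous.measurable (by fun_prop)
  have hgradient : Measurable fun p : E × E => ‖fderiv ℝ φ p.1 p.2‖ₑ ^ 2 := by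
    have := hφ.continuous_fderiv one_ne_zero
    exact Continuous.measurable (by fun_prop)
  let κ : Measure ℝ := volume.restrict (Set.Ioc 0 (2 * π))
  have hκ : κ Set.univ = ENNReal.ofReal (2 * π) := by simp [κ]
  have hκ0 : 2 * κ Set.univ ≠ 0 := by simp [hκ, Real.pi_pos]
  have hκtop : 2 * κ Set.univ ≠ ∞ := by finiteness
  rw [← lintegral_prod _ hgradient.aemeasurable]
  refine (ENNReal.mul_le_mul_iff_right hκ0 hκtop).mp ?_
  calc 2 * κ Set.univ * eVar[φ; μ]
      = κ Set.univ * ∫⁻ p, ‖φ p.2 - φ p.1‖ₑ ^ 2 ∂(μ.prod μ) := by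
        rw [lintegral_prod _ hincrement.aemeasurable,
          lintegral_lintegral_enorm_sub_sq hφ.continuous.aestronglyMeasurable, mul_left_comm,
          mul_assoc]
    _ = ∫⁻ p, ∫⁻ θ, ‖φ (prodRotation θ p).2
          - φ (prodRotation θ p).1‖ₑ ^ 2 ∂κ ∂(μ.prod μ) :=
        (lintegral_lintegral_rotation hμ hincrement κ).symm
    _ ≤ ∫⁻ p, 2 * ∫⁻ θ, ‖fderiv ℝ φ (prodRotation θ p).1
          (prodRotation θ p).2‖ₑ ^ 2 ∂κ ∂(μ.prod μ) :=
        lintegral_mono (setLIntegral_rotation_le hφ)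
    _ = 2 * κ Set.univ * ∫⁻ p, ‖fderiv ℝ φ p.1 p.2‖ₑ ^ 2 ∂(μ.prod μ) := by
        rw [lintegral_const_mul' _ _ ENNReal.ofNat_ne_top,
          lintegral_lintegral_rotation hμ hgradient κ, mul_assoc]

end Rotation

section Gaussian

variable {E : Type*} [NormedAddCommGroup E] [NormedSpace ℝ E] [CompleteSpace E]
  [MeasurableSpace E] [BorelSpace E] {μ : Measure E}

theorem lintegral_enorm_dual_sq [IsFiniteMeasure μ] (hμ : MemLp id 2 μ) {L : StrongDual ℝ E}
    (hL : μ[L] = 0) : ∫⁻ y, ‖L y‖ₑ ^ 2 ∂μ = ENNReal.ofReal (covarianceBilinDual μ L L) := by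
  have hL2 : MemLp L 2 μ := hμ.continuousLinearMap_comp L
  rw [covarianceBilinDual_self_eq_variance hμ, ofReal_variance hL2, evariance, hL]
  simp only [sub_zero]

theorem evariance_le_lintegral_covarianceBilinDual_fderiv [SecondCountableTopology E]
    [IsGaussian μ] (hμ : ∀ L : StrongDual ℝ E, μ[L] = 0) {φ : E → ℝ} (hφ : ContDiff ℝ 1 φ) :
    eVar[φ; μ]
      ≤ ∫⁻ x, ENNReal.ofReal (covarianceBilinDual μ (fderiv ℝ φ x) (fderiv ℝ φ x)) ∂μ := by
  have hL2 : MemLp id 2 μ := IsGaussian.memLp_id μ 2 ENNReal.ofNat_ne_top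
  simp_rw [← lintegral_enorm_dual_sq hL2 (hμ _)]
  exact evariance_le_lintegral_enorm_fderiv_sq
    (IsGaussian.map_rotation_eq_self_of_forall_strongDual_eq_zero hμ) hφ

theorem memLp_and_variance_le_integral_of_covarianceBilinDual_fderiv_le
    [SecondCountableTopology E] [IsGaussian μ] (hμ : ∀ L : StrongDual ℝ E, μ[L] = 0)
    {φ : E → ℝ} (hφ : ContDiff ℝ 1 φ) {g : E → ℝ} (hg : Integrable g μ)
    (hle : ∀ x, covarianceBilinDual μ (fderiv ℝ φ x) (fderiv ℝ φ x) ≤ g x) :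
    MemLp φ 2 μ ∧ Var[φ; μ] ≤ ∫ x, g x ∂μ := by
  have hg0 (x : E) : 0 ≤ g x := (covarianceBilinDual_self_nonneg _).trans (hle x)
  have hpoincare : eVar[φ; μ] ≤ ENNReal.ofReal (∫ x, g x ∂μ) :=
    calc eVar[φ; μ]
        ≤ ∫⁻ x, ENNReal.ofReal (covarianceBilinDual μ (fderiv ℝ φ x) (fderiv ℝ φ x)) ∂μ :=
          evariance_le_lintegral_covarianceBilinDual_fderiv hμ hφ
      _ ≤ ∫⁻ x, ENNReal.ofReal (g x) ∂μ :=
          lintegral_mono fun x => ENNReal.ofReal_le_ofReal (hle x)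
      _ = ENNReal.ofReal (∫ x, g x ∂μ) :=
          (ofReal_integral_eq_lintegral_ofReal hg (ae_of_all _ hg0)).symm
  have hφL2 : MemLp φ 2 μ := (evariance_lt_top_iff_memLp hφ.continuous.aestronglyMeasurable).mp
    (hpoincare.trans_lt ENNReal.ofReal_lt_top)
  rw [← ofReal_variance hφL2, ENNReal.ofReal_le_ofReal_iff (integral_nonneg hg0)] at hpoincare
  exact ⟨hφL2, hpoincare⟩

theorem covarianceBilinDual_self_of_hasLaw_gaussianReal [SecondCountableTopology E] [IsGaussian μ]
    {L : StrongDual ℝ E} {m : ℝ} {v : ℝ≥0} (hL : HasLaw L (gaussianReal m v) μ) :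
    covarianceBilinDual μ L L = v := by
  rw [covarianceBilinDual_self_eq_variance (IsGaussian.memLp_id μ 2 ENNReal.ofNat_ne_top),
    hL.variance_eq, variance_id_gaussianReal]

end Gaussian

section Diagonal

theorem summable_dual_sq {H ι : Type*} [NormedAddCommGroup H] [InnerProductSpace ℝ H]
    [CompleteSpace H] {e : ι → H} (hON : Orthonormal ℝ e) (L : StrongDual ℝ H) :
    Summable fun k => L (e k) ^ 2 := by
  obtain ⟨h, rfl⟩ := (InnerProductSpace.toDual ℝ H).surjective L
  simpa [real_inner_comm] using hON.inner_products_summable h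

variable {ι : Type*} {a lam : ι → ℝ} {Λ α : ℝ}

theorem tsum_mul_le_rpow_mul_tsum_rpow_mul (ha : ∀ k, 0 ≤ a k) (hsum : Summable a)
    (hlam0 : ∀ k, 0 ≤ lam k) (hlam : ∀ k, lam k ≤ Λ) (hα0 : 0 ≤ α) (hα1 : α ≤ 1) :
    ∑' k, lam k * a k ≤ Λ ^ α * ∑' k, lam k ^ (1 - α) * a k := by
  have h1α : 0 ≤ 1 - α := sub_nonneg.mpr hα1
  have hle (k : ι) : lam k * a k ≤ Λ ^ α * (lam k ^ (1 - α) * a k) := by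
    have hlamk := hlam0 k
    have hak := ha k
    calc lam k * a k = lam k ^ α * (lam k ^ (1 - α) * a k) := by
          rw [← mul_assoc, ← Real.rpow_add_of_nonneg (hlam0 k) hα0 h1α, add_sub_cancel,
            Real.rpow_one]
      _ ≤ Λ ^ α * (lam k ^ (1 - α) * a k) := by gcongr; exact hlam k
  have hsummable {c : ι → ℝ} {C : ℝ} (hc0 : ∀ k, 0 ≤ c k) (hc : ∀ k, c k ≤ C) :
      Summable fun k => c k * a k :=
    .of_nonneg_of_le (fun k => mul_nonneg (hc0 k) (ha k))
      (fun k => mul_le_mul_of_nonneg_right (hc k) (ha k)) (hsum.mul_left C)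
  rw [← tsum_mul_left]
  refine (hsummable hlam0 hlam).tsum_le_tsum hle (.mul_left _ ?_)
  exact hsummable (fun k => Real.rpow_nonneg (hlam0 k) _)
    fun k => Real.rpow_le_rpow (hlam0 k) (hlam k) h1α

end Diagonal

end GaussianPoincare

open GaussianPoincare ProbabilityTheory in
theorem stmt_4_general
    {H : Type*} [NormedAddCommGroup H] [InnerProductSpace ℝ H] [CompleteSpace H]
    [MeasurableSpace H] [BorelSpace H] [SecondCountableTopology H] (μ : Measure H)
    {ι : Type*} (e : ι → H) (hON : Orthonormal ℝ e)
    (lam : ι → ℝ) (hlam0 : ∀ k, 0 ≤ lam k) (Λ : ℝ) (hlam : ∀ k, lam k ≤ Λ)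
    (hGauss : ∀ h : H, μ.map (fun x => ⟪h, x⟫)
      = gaussianReal 0 (∑' k, lam k * ⟪h, e k⟫ ^ 2).toNNReal)
    (α : ℝ) (hα0 : 0 ≤ α) (hα1 : α ≤ 1) (φ : H → ℝ) (hφ : ContDiff ℝ 1 φ)
    (hgradint : Integrable (fun x => ∑' k, lam k ^ (1 - α) * fderiv ℝ φ x (e k) ^ 2) μ) :
    MemLp φ 2 μ ∧ ∫ x, (φ x - ∫ y, φ y ∂μ) ^ 2 ∂μ
      ≤ Λ ^ α * ∫ x, ∑' k, lam k ^ (1 - α) * fderiv ℝ φ x (e k) ^ 2 ∂μ := by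
  have hlaw (L : StrongDual ℝ H) :
      HasLaw L (gaussianReal 0 (∑' k, lam k * L (e k) ^ 2).toNNReal) μ := by
    obtain ⟨h, rfl⟩ := (InnerProductSpace.toDual ℝ H).surjective L
    exact ⟨by fun_prop, hGauss h⟩
  have : IsGaussian μ := isGaussian_of_map_eq_gaussianReal fun L => ⟨0, _, (hlaw L).map_eq⟩
  have hcentered (L : StrongDual ℝ H) : μ[L] = 0 := by
    rw [(hlaw L).integral_eq, integral_id_gaussianReal]
  have hcov (L : StrongDual ℝ H) : covarianceBilinDual μ L L = ∑' k, lam k * L (e k) ^ 2 := by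
    rw [covarianceBilinDual_self_of_hasLaw_gaussianReal (hlaw L), Real.coe_toNNReal]
    exact tsum_nonneg fun k => mul_nonneg (hlam0 k) (sq_nonneg _)
  have hgrad (x : H) : covarianceBilinDual μ (fderiv ℝ φ x) (fderiv ℝ φ x)
      ≤ Λ ^ α * ∑' k, lam k ^ (1 - α) * fderiv ℝ φ x (e k) ^ 2 := by
    rw [hcov]
    exact tsum_mul_le_rpow_mul_tsum_rpow_mul (fun k => sq_nonneg _) (summable_dual_sq hON _)
      hlam0 hlam hα0 hα1
  rw [← variance_eq_integral hφ.continuous.aemeasurable, ← integral_const_mul]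
  exact memLp_and_variance_le_integral_of_covarianceBilinDual_fderiv_le hcentered hφ
    (hgradint.const_mul _) hgrad

/-- Gaussian Poincaré inequality in `W^{1,2}_α`: if `μ = N(0,Q)` is a centered
nondegenerate Gaussian measure on a separable Hilbert space `H`, with eigenbasis `e k` of `Q`
and eigenvalues `lam k` (with `lam 0` the largest), and `0 ≤ α ≤ 1`, then for every `C¹`
function `φ` (a core of `W^{1,2}_α(H,μ)`) one has
`∫ (φ - φ̄)² dμ ≤ (lam 0)^α ∫ |Q^{(1-α)/2}Dφ|² dμ`. -/
theorem stmt_4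
    {H : Type*} [NormedAddCommGroup H] [InnerProductSpace ℝ H] [CompleteSpace H]
    [MeasurableSpace H] [BorelSpace H] [SecondCountableTopology H]
    (μ : Measure H) [IsProbabilityMeasure μ]
    (e : ℕ → H) (hON : Orthonormal ℝ e)
    (htotal : (Submodule.span ℝ (Set.range e)).topologicalClosure = ⊤)
    (lam : ℕ → ℝ) (hlampos : ∀ k, 0 < lam k) (hsum : Summable lam)
    (hlam1 : ∀ k, lam k ≤ lam 0)
    -- μ is the centered Gaussian measure with covariance Q, Q e k = lam k • e k
    (hGauss : ∀ h : H, Measure.map (fun x => ⟪h, x⟫) μ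
      = ProbabilityTheory.gaussianReal 0 (Real.toNNReal (∑' k, lam k * ⟪h, e k⟫ ^ 2)))
    (α : ℝ) (hα0 : 0 ≤ α) (hα1 : α ≤ 1)
    (φ : H → ℝ) (hφ : ContDiff ℝ 1 φ)
    (hφint : Integrable (fun x => (φ x) ^ 2) μ)
    (hgradint : Integrable (fun x => ∑' k, lam k ^ (1 - α) * (fderiv ℝ φ x (e k)) ^ 2) μ) :
    ∫ x, (φ x - ∫ y, φ y ∂μ) ^ 2 ∂μ
      ≤ lam 0 ^ α * ∫ x, ∑' k, lam k ^ (1 - α) * (fderiv ℝ φ x (e k)) ^ 2 ∂μ :=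
  (stmt_4_general μ e hON lam (fun k => (hlampos k).le) (lam 0) hlam1 hGauss α hα0 hα1 φ hφ
    hgradint).2
end

section
/- Let μ = N(0, Q) be a centered Gaussian measure on a separable Hilbert space H. There exists C > 0 such that for every φ ∈ W^{1,2}_0(H, μ), ∫_H |x|² φ(x)² μ(dx) ≤ C ‖φ‖²_{W^{1,2}_0(H, μ)}. -/
/-!
In one dimension, with `ρ` the density of `N(0, v)`, the function `2 v t f(t)² ρ(t)` has derivative
`(2 v f² + 4 v t f f' - 2 t² f²) ρ`, and its increment over an interval containing `0` is
nonnegative. As `4 v t f f' ≤ t² f² + 4 v² f'²`, this gives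
`∫ t² f² dN(0, v) ≤ ∫ (2 v f² + 4 v² f'²) dN(0, v)` with no integrability assumption on `f`.

On `H`, the coordinate of `x` along an eigenvector `bₖ` of the covariance has law `N(0, λₖ)` and is
independent of the rest of `x`, so the one-dimensional inequality holds along every line parallel
to `bₖ`. Integrating over these lines, summing over `k` by Parseval's identity and using
`λₖ² ≤ (∑ⱼ λⱼ) λₖ` bounds `∫ |x|² φ² dμ`.
-/

open MeasureTheory
open scoped RealInnerProductSpace

open ProbabilityTheory Filter Set
open scoped NNReal ENNReal

lemma integrable_sq_of_abs_le {X : Type*} [TopologicalSpace X] [MeasurableSpace X]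
    [OpensMeasurableSpace X] {μ : Measure X} [IsFiniteMeasure μ] {f : X → ℝ} (hf : Continuous f)
    {M : ℝ} (hM : ∀ x, |f x| ≤ M) : Integrable (fun x => f x ^ 2) μ := by
  refine .of_bound (hf.pow 2).measurable.aestronglyMeasurable (M ^ 2) (ae_of_all _ fun x => ?_)
  rw [norm_pow, Real.norm_eq_abs]
  gcongr
  exact hM x

lemma integrable_and_integral_le_of_lintegral_ofReal_le {α : Type*} [MeasurableSpace α]
    {μ : Measure α} {f g : α → ℝ} (hf : AEStronglyMeasurable f μ) (hf₀ : 0 ≤ᵐ[μ] f)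
    (hg : Integrable g μ) (hg₀ : 0 ≤ᵐ[μ] g)
    (hle : ∫⁻ x, ENNReal.ofReal (f x) ∂μ ≤ ∫⁻ x, ENNReal.ofReal (g x) ∂μ) :
    Integrable f μ ∧ ∫ x, f x ∂μ ≤ ∫ x, g x ∂μ := by
  rw [← ofReal_integral_eq_lintegral_ofReal hg hg₀] at hle
  have hf_int : Integrable f μ :=
    (lintegral_ofReal_ne_top_iff_integrable hf hf₀).1 (hle.trans_lt ENNReal.ofReal_lt_top).ne
  rw [← ofReal_integral_eq_lintegral_ofReal hf_int hf₀,
    ENNReal.ofReal_le_ofReal_iff (integral_nonneg_of_ae hg₀)] at hle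
  exact ⟨hf_int, hle⟩

lemma hasDerivAt_gaussianPDFReal (m : ℝ) (v : ℝ≥0) (x : ℝ) :
    HasDerivAt (gaussianPDFReal m v) (-((x - m) / v) * gaussianPDFReal m v x) x := by
  have hexponent : HasDerivAt (fun y : ℝ => -(y - m) ^ 2 / (2 * v)) (-((x - m) / v)) x := by
    refine (((((hasDerivAt_id x).sub_const m).pow 2).neg).div_const (2 * (v : ℝ))).congr_deriv ?_
    simp only [id, Nat.cast_ofNat, Nat.add_one_sub_one, pow_one, mul_one, neg_div]
    rw [mul_div_mul_left _ _ two_ne_zero]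
  rw [gaussianPDFReal_def]
  exact (hexponent.exp.const_mul _).congr_deriv (by ring)

lemma continuous_gaussianPDFReal (m : ℝ) (v : ℝ≥0) : Continuous (gaussianPDFReal m v) :=
  continuous_iff_continuousAt.2 fun x => (hasDerivAt_gaussianPDFReal m v x).continuousAt

lemma lintegral_ofReal_gaussianReal (m : ℝ) {v : ℝ≥0} (hv : v ≠ 0) (g : ℝ → ℝ) :
    ∫⁻ t, ENNReal.ofReal (g t) ∂gaussianReal m v =
      ∫⁻ t, ENNReal.ofReal (g t * gaussianPDFReal m v t) := by
  rw [gaussianReal_of_var_ne_zero m hv, lintegral_withDensity_eq_lintegral_mul_non_measurable _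
    (measurable_gaussianPDF m v) (ae_of_all _ fun _ => gaussianPDF_lt_top)]
  refine lintegral_congr fun t => ?_
  rw [ENNReal.ofReal_mul' (gaussianPDFReal_nonneg m v t), mul_comm]
  rfl

section OneDimensional

variable {f : ℝ → ℝ}

lemma intervalIntegral_sq_mul_sq_mul_gaussianPDFReal_le {v : ℝ≥0} (hv : v ≠ 0)
    (hf : Differentiable ℝ f) {a b : ℝ} (ha : a ≤ 0) (hb : 0 ≤ b)
    (hint : IntervalIntegrable
      (fun t => (2 * v * f t ^ 2 + 4 * v ^ 2 * deriv f t ^ 2) * gaussianPDFReal 0 v t)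
      volume a b) :
    ∫ t in a..b, t ^ 2 * f t ^ 2 * gaussianPDFReal 0 v t ≤
      ∫ t in a..b, (2 * v * f t ^ 2 + 4 * v ^ 2 * deriv f t ^ 2) * gaussianPDFReal 0 v t := by
  set ρ := gaussianPDFReal 0 v
  have hab := ha.trans hb
  have hρ₀ (t : ℝ) : 0 ≤ ρ t := gaussianPDFReal_nonneg 0 v t
  have hderiv (t : ℝ) : HasDerivAt (fun t => 2 * v * (t * f t ^ 2 * ρ t))
      ((2 * v * f t ^ 2 + 4 * v * t * f t * deriv f t - 2 * (t ^ 2 * f t ^ 2)) * ρ t) t := by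
    refine ((((hasDerivAt_id t).mul ((hf t).hasDerivAt.pow 2)).mul
      (hasDerivAt_gaussianPDFReal 0 v t)).const_mul (2 * (v : ℝ))).congr_deriv ?_
    simp only [id, ρ, Pi.mul_apply, Pi.pow_apply]
    field_simp
    ring
  have hρ : Continuous ρ := continuous_gaussianPDFReal 0 v
  have hint' : IntervalIntegrable (fun t => t ^ 2 * f t ^ 2 * ρ t) volume a b :=
    (((continuous_id.pow 2).mul (hf.continuous.pow 2)).mul hρ).intervalIntegrable a b
  rw [← sub_nonneg, ← intervalIntegral.integral_sub hint hint']
  calc (0 : ℝ)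
    _ ≤ 2 * v * (b * f b ^ 2 * ρ b) - 2 * v * (a * f a ^ 2 * ρ a) := by
      have hρa := hρ₀ a
      have hρb := hρ₀ b
      have ha₀ : 0 ≤ -a := neg_nonneg.2 ha
      have hleft : 0 ≤ 2 * v * (-a * f a ^ 2 * ρ a) := by positivity
      have hright : 0 ≤ 2 * v * (b * f b ^ 2 * ρ b) := by positivity
      linarith
    _ ≤ _ := by
      refine intervalIntegral.sub_le_integral_of_hasDeriv_right_of_le hab
        (fun t _ => (hderiv t).continuousAt.continuousWithinAt)
        (fun t _ => (hderiv t).hasDerivWithinAt)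
        ((intervalIntegrable_iff_integrableOn_Icc_of_le hab).1 (hint.sub hint')) fun t _ => ?_
      rw [← sub_mul]
      refine mul_le_mul_of_nonneg_right ?_ (hρ₀ t)
      linarith [sq_nonneg (t * f t - 2 * v * deriv f t)]

lemma lintegral_sq_mul_sq_gaussianReal_le (v : ℝ≥0) (hf : Differentiable ℝ f) :
    ∫⁻ t, ENNReal.ofReal (t ^ 2 * f t ^ 2) ∂gaussianReal 0 v ≤
      ∫⁻ t, ENNReal.ofReal (2 * v * f t ^ 2 + 4 * v ^ 2 * deriv f t ^ 2) ∂gaussianReal 0 v := by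
  obtain rfl | hv := eq_or_ne v 0
  · simp
  rw [lintegral_ofReal_gaussianReal 0 hv, lintegral_ofReal_gaussianReal 0 hv]
  set F := fun t => t ^ 2 * f t ^ 2 * gaussianPDFReal 0 v t
  set G := fun t => (2 * v * f t ^ 2 + 4 * v ^ 2 * deriv f t ^ 2) * gaussianPDFReal 0 v t
  have hρ := continuous_gaussianPDFReal 0 v
  have hfm := hf.continuous.measurable
  have hF : Continuous F := ((continuous_id.pow 2).mul (hf.continuous.pow 2)).mul hρ
  have hG : Measurable G := by fun_prop
  have hF₀ (t : ℝ) : 0 ≤ F t := mul_nonneg (by positivity) (gaussianPDFReal_nonneg 0 v t)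
  have hG₀ (t : ℝ) : 0 ≤ G t := mul_nonneg (by positivity) (gaussianPDFReal_nonneg 0 v t)
  obtain htop | hfin := eq_or_ne (∫⁻ t, ENNReal.ofReal (G t)) ⊤
  · exact htop ▸ le_top
  have hG_int : Integrable G :=
    (lintegral_ofReal_ne_top_iff_integrable hG.aestronglyMeasurable (ae_of_all _ hG₀)).1 hfin
  refine le_of_tendsto' ((aecover_Ioc (tendsto_neg_atTop_atBot.comp tendsto_natCast_atTop_atTop)
    tendsto_natCast_atTop_atTop).lintegral_tendsto_of_nat
      hF.measurable.ennreal_ofReal.aemeasurable) fun n => ?_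
  have hn : -(n : ℝ) ≤ n := by linarith [n.cast_nonneg (α := ℝ)]
  calc ∫⁻ t in Ioc (-n : ℝ) n, ENNReal.ofReal (F t)
    _ = ENNReal.ofReal (∫ t in (-n : ℝ)..n, F t) := by
      rw [intervalIntegral.integral_of_le hn,
        ofReal_integral_eq_lintegral_ofReal hF.integrableOn_Ioc (ae_of_all _ hF₀)]
    _ ≤ ENNReal.ofReal (∫ t in (-n : ℝ)..n, G t) :=
      ENNReal.ofReal_le_ofReal <| intervalIntegral_sq_mul_sq_mul_gaussianPDFReal_le hv hf
        (by simp) (by simp) hG_int.intervalIntegrable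
    _ = ∫⁻ t in Ioc (-n : ℝ) n, ENNReal.ofReal (G t) := by
      rw [intervalIntegral.integral_of_le hn,
        ofReal_integral_eq_lintegral_ofReal hG_int.integrableOn (ae_of_all _ hG₀)]
    _ ≤ ∫⁻ t, ENNReal.ofReal (G t) := setLIntegral_le_lintegral _ _

end OneDimensional

section GaussianLine

variable {H : Type*} [NormedAddCommGroup H] [InnerProductSpace ℝ H] [MeasurableSpace H]
  [BorelSpace H] {μ : Measure H}

lemma charFun_eq_of_map_inner_eq_gaussianReal {h : H} {v : ℝ≥0}
    (hμ : μ.map (fun x => ⟪h, x⟫) = gaussianReal 0 v) :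
    charFun μ h = Complex.exp (-(v / 2)) := by
  have hmap : μ.map (InnerProductSpace.toDualMap ℝ H h) = gaussianReal 0 v := hμ
  rw [charFun_eq_charFunDual_toDualMap, charFunDual_eq_charFun_map_one, hmap, charFun_gaussianReal]
  simp

variable [CompleteSpace H] [SecondCountableTopology H] [IsFiniteMeasure μ]
  {q : H → ℝ≥0} {e : H} {v : ℝ≥0}

lemma map_sub_inner_smul_conv_map_smul_gaussianReal
    (hμ : ∀ h, μ.map (fun x => ⟪h, x⟫) = gaussianReal 0 (q h))
    (hq : ∀ h, (q h : ℝ) = q (h - ⟪e, h⟫ • e) + v * ⟪e, h⟫ ^ 2) :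
    μ.map (fun x => x - ⟪e, x⟫ • e) ∗ (gaussianReal 0 v).map (fun t => t • e) = μ := by
  refine Measure.ext_of_charFun (funext fun h => ?_)
  have hproj : charFun (μ.map fun x => x - ⟪e, x⟫ • e) h = charFun μ (h - ⟪e, h⟫ • e) := by
    rw [charFun_apply, charFun_apply, integral_map (by fun_prop) (by fun_prop)]
    congr! 5 with x
    simp only [inner_sub_left, inner_sub_right, inner_smul_left, inner_smul_right,
      real_inner_comm e x, conj_trivial]
    rw [mul_comm]
  have hline : charFun ((gaussianReal 0 v).map fun t => t • e) h =
      charFun (gaussianReal 0 v) ⟪e, h⟫ := by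
    rw [charFun_apply, charFun_apply, integral_map (by fun_prop) (by fun_prop)]
    simp [inner_smul_left, mul_comm]
  rw [charFun_conv, hproj, hline, charFun_gaussianReal,
    charFun_eq_of_map_inner_eq_gaussianReal (hμ _), charFun_eq_of_map_inner_eq_gaussianReal (hμ h),
    ← Complex.exp_add]
  congr 1
  have hqh : (q h : ℂ) = q (h - ⟪e, h⟫ • e) + v * (⟪e, h⟫ : ℂ) ^ 2 :=
    mod_cast congrArg Complex.ofReal (hq h)
  rw [hqh]
  push_cast
  ring

lemma lintegral_eq_lintegral_lintegral_gaussianReal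
    (hμ : ∀ h, μ.map (fun x => ⟪h, x⟫) = gaussianReal 0 (q h))
    (hq : ∀ h, (q h : ℝ) = q (h - ⟪e, h⟫ • e) + v * ⟪e, h⟫ ^ 2)
    {F : H → ℝ≥0∞} (hF : Measurable F) :
    ∫⁻ x, F x ∂μ = ∫⁻ x, ∫⁻ t, F (x - ⟪e, x⟫ • e + t • e) ∂gaussianReal 0 v ∂μ := by
  conv_lhs => rw [← map_sub_inner_smul_conv_map_smul_gaussianReal hμ hq]
  rw [Measure.lintegral_conv hF, lintegral_map (by fun_prop) (by fun_prop)]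
  exact lintegral_congr fun x => lintegral_map (by fun_prop) (by fun_prop)

lemma lintegral_inner_sq_mul_sq_le (he : ‖e‖ = 1)
    (hμ : ∀ h, μ.map (fun x => ⟪h, x⟫) = gaussianReal 0 (q h))
    (hq : ∀ h, (q h : ℝ) = q (h - ⟪e, h⟫ • e) + v * ⟪e, h⟫ ^ 2)
    {φ : H → ℝ} (hφ : Differentiable ℝ φ) :
    ∫⁻ x, ENNReal.ofReal (⟪e, x⟫ ^ 2 * φ x ^ 2) ∂μ ≤
      ∫⁻ x, ENNReal.ofReal (2 * v * φ x ^ 2 + 4 * v ^ 2 * (fderiv ℝ φ x e) ^ 2) ∂μ := by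
  have hφ_meas : Measurable φ := hφ.continuous.measurable
  rw [lintegral_eq_lintegral_lintegral_gaussianReal hμ hq (by fun_prop),
    lintegral_eq_lintegral_lintegral_gaussianReal hμ hq
      (F := fun x => ENNReal.ofReal (2 * v * φ x ^ 2 + 4 * v ^ 2 * (fderiv ℝ φ x e) ^ 2))
      (by fun_prop)]
  refine lintegral_mono fun x => ?_
  have hcoord (t : ℝ) : ⟪e, x - ⟪e, x⟫ • e + t • e⟫ = t := by
    simp [inner_add_right, inner_sub_right, inner_smul_right, he]
  have hline (t : ℝ) : HasDerivAt (fun t : ℝ => φ (x - ⟪e, x⟫ • e + t • e))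
      (fderiv ℝ φ (x - ⟪e, x⟫ • e + t • e) e) t := by
    refine (hφ _).hasFDerivAt.comp_hasDerivAt t ?_
    simpa using ((hasDerivAt_id t).smul_const e).const_add (x - ⟪e, x⟫ • e)
  simpa only [hcoord, (hline _).deriv] using
    lintegral_sq_mul_sq_gaussianReal_le v fun t => (hline t).differentiableAt

end GaussianLine

section Diagonal

variable {H ι : Type*} [NormedAddCommGroup H] [InnerProductSpace ℝ H] {b : ι → H} {lam : ι → ℝ}

/-- The quadratic form `h ↦ ⟨Q h, h⟩` of the operator `Q = ∑ₖ λₖ bₖ ⊗ bₖ`: the variance of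
`⟨h, x⟩` under the Gaussian measure `N(0, Q)`. -/
noncomputable def covarianceForm (b : ι → H) (lam : ι → ℝ) (h : H) : ℝ :=
  ∑' k, lam k * ⟪h, b k⟫ ^ 2

/-- The carré du champ `|Q^{1/2} Dφ(x)|²`, i.e. the squared norm of the Malliavin gradient of `φ`,
for `Q = ∑ₖ λₖ bₖ ⊗ bₖ` with `b` orthonormal, written in the coordinates of `b`. -/
noncomputable def carreDuChamp (b : ι → H) (lam : ι → ℝ) (φ : H → ℝ) (x : H) : ℝ :=
  ∑' k, lam k * (fderiv ℝ φ x (b k)) ^ 2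

lemma norm_mul_sq_apply_le (hb : Orthonormal ℝ b) (ℓ : H →L[ℝ] ℝ) (k : ι) :
    ‖lam k * ℓ (b k) ^ 2‖ ≤ |lam k| * ‖ℓ‖ ^ 2 := by
  have hℓ : ‖ℓ (b k)‖ ≤ ‖ℓ‖ := ℓ.unit_le_opNorm _ (hb.norm_eq_one k).le
  rw [norm_mul, norm_pow, Real.norm_eq_abs (lam k)]
  gcongr

lemma summable_mul_sq_apply (hb : Orthonormal ℝ b) (hlam : Summable lam) (ℓ : H →L[ℝ] ℝ) :
    Summable fun k => lam k * ℓ (b k) ^ 2 :=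
  .of_norm_bounded (hlam.abs.mul_right _) (norm_mul_sq_apply_le hb ℓ)

lemma covarianceForm_eq_add (hb : Orthonormal ℝ b) (hlam : Summable lam) (k : ι) (h : H) :
    covarianceForm b lam h =
      covarianceForm b lam (h - ⟪b k, h⟫ • b k) + lam k * ⟪b k, h⟫ ^ 2 := by
  classical
  have hsum : Summable fun j => lam j * ⟪h, b j⟫ ^ 2 :=
    summable_mul_sq_apply hb hlam (innerSL ℝ h)
  rw [covarianceForm, hsum.tsum_eq_add_tsum_ite k, add_comm, covarianceForm, real_inner_comm]
  congr 2 with j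
  rw [inner_sub_left, inner_smul_left, orthonormal_iff_ite.1 hb]
  obtain rfl | hj := eq_or_ne j k
  · simp [real_inner_comm]
  · simp [hj, hj.symm]

lemma covarianceForm_nonneg (hlam₀ : ∀ k, 0 ≤ lam k) (h : H) : 0 ≤ covarianceForm b lam h :=
  tsum_nonneg fun k => mul_nonneg (hlam₀ k) (sq_nonneg _)

lemma carreDuChamp_nonneg (hlam₀ : ∀ k, 0 ≤ lam k) (φ : H → ℝ) (x : H) :
    0 ≤ carreDuChamp b lam φ x :=
  tsum_nonneg fun k => mul_nonneg (hlam₀ k) (sq_nonneg _)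

lemma hasSum_inner_sq (b : HilbertBasis ι ℝ H) (x : H) :
    HasSum (fun k => ⟪b k, x⟫ ^ 2) (‖x‖ ^ 2) := by
  simpa only [real_inner_comm (b _) x, ← sq, real_inner_self_eq_norm_sq] using
    b.hasSum_inner_mul_inner x x

variable [MeasurableSpace H] [BorelSpace H]

lemma integrable_carreDuChamp {μ : Measure H} [IsFiniteMeasure μ] (hb : Orthonormal ℝ b)
    (hlam : Summable lam) {φ : H → ℝ} (hφ : ContDiff ℝ 1 φ) {M : ℝ}
    (hM : ∀ x, ‖fderiv ℝ φ x‖ ≤ M) : Integrable (carreDuChamp b lam φ) μ := by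
  have hbound (k : ι) (x : H) : ‖lam k * fderiv ℝ φ x (b k) ^ 2‖ ≤ |lam k| * M ^ 2 :=
    (norm_mul_sq_apply_le hb _ k).trans (by gcongr; exact hM x)
  have hsum : Summable fun k => |lam k| * M ^ 2 := hlam.abs.mul_right _
  have hcont : Continuous (carreDuChamp b lam φ) :=
    continuous_tsum (fun k => continuous_const.mul
      (((hφ.continuous_fderiv one_ne_zero).clm_apply continuous_const).pow 2)) hsum hbound
  exact .of_bound hcont.measurable.aestronglyMeasurable _
    (ae_of_all _ fun x => tsum_of_norm_bounded hsum.hasSum (hbound · x))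

variable [CompleteSpace H] [SecondCountableTopology H] {μ : Measure H} [IsFiniteMeasure μ]

lemma lintegral_inner_basis_sq_mul_sq_le (hb : Orthonormal ℝ b) (hlam₀ : ∀ k, 0 ≤ lam k)
    (hlam : Summable lam)
    (hμ : ∀ h, μ.map (fun x => ⟪h, x⟫) = gaussianReal 0 (covarianceForm b lam h).toNNReal)
    {φ : H → ℝ} (hφ : Differentiable ℝ φ) (k : ι) :
    ∫⁻ x, ENNReal.ofReal (⟪b k, x⟫ ^ 2 * φ x ^ 2) ∂μ ≤
      ∫⁻ x, ENNReal.ofReal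
        (2 * lam k * φ x ^ 2 + 4 * lam k ^ 2 * (fderiv ℝ φ x (b k)) ^ 2) ∂μ := by
  have hsplit (h : H) : ((covarianceForm b lam h).toNNReal : ℝ) =
      (covarianceForm b lam (h - ⟪b k, h⟫ • b k)).toNNReal + (lam k).toNNReal * ⟪b k, h⟫ ^ 2 := by
    simpa only [Real.coe_toNNReal _ (covarianceForm_nonneg hlam₀ _),
      Real.coe_toNNReal _ (hlam₀ k)] using covarianceForm_eq_add hb hlam k h
  simpa only [Real.coe_toNNReal _ (hlam₀ k)] using
    lintegral_inner_sq_mul_sq_le (hb.norm_eq_one k) hμ hsplit hφ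

lemma lintegral_norm_sq_mul_sq_le [Countable ι] (b : HilbertBasis ι ℝ H) (hlam₀ : ∀ k, 0 ≤ lam k)
    (hlam : Summable lam)
    (hμ : ∀ h, μ.map (fun x => ⟪h, x⟫) = gaussianReal 0 (covarianceForm b lam h).toNNReal)
    {φ : H → ℝ} (hφ : Differentiable ℝ φ) :
    ∫⁻ x, ENNReal.ofReal (‖x‖ ^ 2 * φ x ^ 2) ∂μ ≤
      ∫⁻ x, ENNReal.ofReal (4 * (∑' k, lam k) * (φ x ^ 2 + carreDuChamp b lam φ x)) ∂μ := by
  set T := ∑' k, lam k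
  have hT (k : ι) : lam k ≤ T := hlam.le_tsum k fun j _ => hlam₀ j
  have hφ_meas : Measurable φ := hφ.continuous.measurable
  have hnorm (x : H) : ENNReal.ofReal (‖x‖ ^ 2 * φ x ^ 2) =
      ∑' k, ENNReal.ofReal (⟪b k, x⟫ ^ 2 * φ x ^ 2) := by
    have hx := (hasSum_inner_sq b x).mul_right (φ x ^ 2)
    rw [← hx.tsum_eq, ENNReal.ofReal_tsum_of_nonneg (fun k => by positivity) hx.summable]
  have henergy (x : H) : ∑' k, ENNReal.ofReal
      (4 * lam k * φ x ^ 2 + 4 * T * (lam k * fderiv ℝ φ x (b k) ^ 2)) =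
        ENNReal.ofReal (4 * T * (φ x ^ 2 + carreDuChamp b lam φ x)) := by
    have hx := ((hlam.hasSum.mul_left 4).mul_right (φ x ^ 2)).add
      ((summable_mul_sq_apply b.orthonormal hlam (fderiv ℝ φ x)).hasSum.mul_left (4 * T))
    rw [← ENNReal.ofReal_tsum_of_nonneg _ hx.summable, hx.tsum_eq, carreDuChamp, mul_add]
    intro k
    have hk := hlam₀ k
    have hT₀ : 0 ≤ T := hk.trans (hT k)
    positivity
  simp_rw [hnorm, ← henergy]
  rw [lintegral_tsum fun k => by fun_prop, lintegral_tsum fun k => by fun_prop]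
  refine ENNReal.tsum_le_tsum fun k =>
    (lintegral_inner_basis_sq_mul_sq_le b.orthonormal hlam₀ hlam hμ hφ k).trans
      (lintegral_mono fun x => ENNReal.ofReal_le_ofReal ?_)
  have hk : lam k ^ 2 ≤ T * lam k := by
    rw [sq]
    exact mul_le_mul_of_nonneg_right (hT k) (hlam₀ k)
  calc 2 * lam k * φ x ^ 2 + 4 * lam k ^ 2 * fderiv ℝ φ x (b k) ^ 2
    _ ≤ 4 * lam k * φ x ^ 2 + 4 * (T * lam k) * fderiv ℝ φ x (b k) ^ 2 := by
      have hk₀ := hlam₀ k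
      gcongr
      norm_num
    _ = 4 * lam k * φ x ^ 2 + 4 * T * (lam k * fderiv ℝ φ x (b k) ^ 2) := by ring

theorem stmt_12_general [Countable ι] (b : HilbertBasis ι ℝ H) (hlam₀ : ∀ k, 0 ≤ lam k)
    (hlam : Summable lam)
    (hμ : ∀ h, μ.map (fun x => ⟪h, x⟫) = gaussianReal 0 (covarianceForm b lam h).toNNReal)
    {φ : H → ℝ} (hφ : Differentiable ℝ φ) (hφ_int : Integrable (fun x => φ x ^ 2) μ)
    (hDφ_int : Integrable (carreDuChamp b lam φ) μ) :
    Integrable (fun x => ‖x‖ ^ 2 * φ x ^ 2) μ ∧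
      ∫ x, ‖x‖ ^ 2 * φ x ^ 2 ∂μ ≤
        4 * (∑' k, lam k) * (∫ x, φ x ^ 2 ∂μ + ∫ x, carreDuChamp b lam φ x ∂μ) := by
  have hT : 0 ≤ ∑' k, lam k := tsum_nonneg hlam₀
  have hφ_meas : Measurable φ := hφ.continuous.measurable
  rw [← integral_add hφ_int hDφ_int, ← integral_const_mul]
  refine integrable_and_integral_le_of_lintegral_ofReal_le (by fun_prop)
    (ae_of_all _ fun x => by positivity) ((hφ_int.add hDφ_int).const_mul _)
    (ae_of_all _ fun x => ?_) (lintegral_norm_sq_mul_sq_le b hlam₀ hlam hμ hφ)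
  have hcdc := carreDuChamp_nonneg (b := b) hlam₀ φ x
  positivity

end Diagonal

/-- for a centered Gaussian measure `μ = N(0,Q)` on a separable Hilbert space,
there is `C > 0` with `∫ |x|² φ(x)² dμ ≤ C ‖φ‖²_{W^{1,2}_0(H,μ)}` for all `φ` in (a core of)
the Malliavin–Sobolev space, where
`‖φ‖²_{W^{1,2}_0} = ∫ φ² dμ + ∫ |Q^{1/2}Dφ|² dμ = ∫ φ² dμ + ∫ Σ_k lam k (D_kφ)² dμ`. -/
theorem stmt_12
    {H : Type*} [NormedAddCommGroup H] [InnerProductSpace ℝ H] [CompleteSpace H]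
    [MeasurableSpace H] [BorelSpace H] [SecondCountableTopology H]
    (μ : Measure H) [IsProbabilityMeasure μ]
    (e : ℕ → H) (hON : Orthonormal ℝ e)
    (htotal : (Submodule.span ℝ (Set.range e)).topologicalClosure = ⊤)
    (lam : ℕ → ℝ) (hlampos : ∀ k, 0 < lam k) (hsum : Summable lam)
    (hGauss : ∀ h : H, Measure.map (fun x => ⟪h, x⟫) μ
      = ProbabilityTheory.gaussianReal 0 (Real.toNNReal (∑' k, lam k * ⟪h, e k⟫ ^ 2))) :
    ∃ C > 0, ∀ φ : H → ℝ, ContDiff ℝ 1 φ →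
      (∃ M, ∀ x, |φ x| ≤ M) → (∃ M, ∀ x, ‖fderiv ℝ φ x‖ ≤ M) →
      ∫ x, ‖x‖ ^ 2 * (φ x) ^ 2 ∂μ
        ≤ C * (∫ x, (φ x) ^ 2 ∂μ + ∫ x, ∑' k, lam k * (fderiv ℝ φ x (e k)) ^ 2 ∂μ) := by
  have htrace : 0 < ∑' k, lam k := hsum.tsum_pos (fun k => (hlampos k).le) 0 (hlampos 0)
  obtain ⟨b, rfl⟩ : ∃ b : HilbertBasis ℕ ℝ H, ⇑b = e :=
    ⟨.mk hON htotal.ge, HilbertBasis.coe_mk _ _⟩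
  refine ⟨4 * ∑' k, lam k, by positivity, fun φ hφ ⟨M, hM⟩ ⟨N, hN⟩ => ?_⟩
  exact (stmt_12_general b (fun k => (hlampos k).le) hsum hGauss (hφ.differentiable one_ne_zero)
    (integrable_sq_of_abs_le hφ.continuous hM) (integrable_carreDuChamp hON hsum hφ hN)).2
end

section
/- Let μ be a finite Borel measure on ℝ. Suppose there exists C > 0 such that |∫_ℝ φ'(r) μ(dr)| ≤ C‖φ‖_∞ for all φ ∈ C¹_b(ℝ). Then μ is absolutely continuous with respect to Lebesgue measure, with density of bounded variation bounded by C. -/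
open MeasureTheory

open Filter Set Topology
open scoped Convolution ENNReal

/-! Mollify `μ` by approximate identities `ρₙ`. Testing the hypothesis with a primitive of `ρₙ`
shows that the mollified densities take values in `[0, C]`; testing it with signed sums of
increments of that primitive, which is monotone with oscillation `∫ ρₙ = 1`, shows that their
variation is at most `C`. The first test, applied to continuous functions squeezed between a
compact set and its open neighbourhoods, also gives `μ ≤ C • volume`. By Tychonoff the mollified
densities cluster pointwise at some `k`, which inherits both bounds, and at almost every point
they converge to the Radon–Nikodym derivative of `μ`, so that `k` is a version of it. -/

section Variation

theorem abs_sum_mul_sub_le_of_monotone {R : Type*} [Ring R] [LinearOrder R] [IsOrderedRing R]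
    {e w : ℕ → R} (he : ∀ i, |e i| ≤ 1) (hw : Monotone w) (n : ℕ) :
    |∑ i ∈ Finset.range n, e i * (w (i + 1) - w i)| ≤ w n - w 0 :=
  calc |∑ i ∈ Finset.range n, e i * (w (i + 1) - w i)|
      ≤ ∑ i ∈ Finset.range n, |e i * (w (i + 1) - w i)| := Finset.abs_sum_le_sum_abs _ _
    _ ≤ ∑ i ∈ Finset.range n, (w (i + 1) - w i) := by
        refine Finset.sum_le_sum fun i _ => ?_
        have h_increment : 0 ≤ w (i + 1) - w i := sub_nonneg.2 (hw i.le_succ)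
        rw [abs_mul, abs_of_nonneg h_increment]
        exact mul_le_of_le_one_left h_increment (he i)
    _ = w n - w 0 := Finset.sum_range_sub w n

theorem eVariationOn_le_ofReal_of_sum_mul_sub_le {α : Type*} [LinearOrder α] {f : α → ℝ}
    {s : Set α} {V : ℝ}
    (h : ∀ (n : ℕ) (u : ℕ → α) (e : ℕ → ℝ), Monotone u → (∀ i, u i ∈ s) → (∀ i, |e i| ≤ 1) →
      ∑ i ∈ Finset.range n, e i * (f (u (i + 1)) - f (u i)) ≤ V) :
    eVariationOn f s ≤ ENNReal.ofReal V := by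
  refine iSup_le fun ⟨n, u, hu, hus⟩ => ?_
  simp only [edist_dist, Real.dist_eq]
  rw [← ENNReal.ofReal_sum_of_nonneg fun _ _ => abs_nonneg _]
  refine ENNReal.ofReal_le_ofReal ?_
  have h_sign (a : ℝ) : |(SignType.sign a : ℝ)| ≤ 1 := by
    rcases lt_trichotomy a 0 with ha | rfl | ha <;> simp [*]
  simpa only [sign_mul_self] using
    h n u (fun i => SignType.sign (f (u (i + 1)) - f (u i))) hu hus fun _ => h_sign _

variable {α E ι : Type*} [LinearOrder α] {F : ι → α → E} {p : Filter ι} {V : ℝ≥0∞}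

theorem eVariationOn_le_of_tendsto [PseudoEMetricSpace E] {f : α → E} {s : Set α}
    (hF : ∀ x ∈ s, Tendsto (fun i => F i x) p (𝓝 (f x)))
    (hV : ∃ᶠ i in p, eVariationOn (F i) s ≤ V) : eVariationOn f s ≤ V :=
  le_of_not_gt fun h_lt =>
    let ⟨_, h_le, h_gt⟩ :=
      (hV.and_eventually (eVariationOn.lowerSemicontinuous_aux hF h_lt)).exists
    h_gt.not_ge h_le

theorem exists_eVariationOn_le_and_eq_of_tendsto [EMetricSpace E] [NeBot p] {K : Set E}
    (hK : IsCompact K) (hFK : ∀ᶠ i in p, ∀ x, F i x ∈ K)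
    (hV : ∀ᶠ i in p, eVariationOn (F i) univ ≤ V) :
    ∃ k : α → E, (∀ x, k x ∈ K) ∧ eVariationOn k univ ≤ V ∧
      ∀ x y, Tendsto (fun i => F i x) p (𝓝 y) → k x = y := by
  let U : Ultrafilter ι := Ultrafilter.of p
  have hUp : (U : Filter ι) ≤ p := Ultrafilter.of_le p
  have hUK : ∀ᶠ i in U, F i ∈ univ.pi fun _ => K :=
    (hFK.filter_mono hUp).mono fun _ hi x _ => hi x
  obtain ⟨k, hkK, hk⟩ := (isCompact_univ_pi fun _ : α => hK).ultrafilter_le_nhds (U.map F)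
    (le_principal_iff.2 hUK)
  have h_lim (x : α) : Tendsto (fun i => F i x) U (𝓝 (k x)) := tendsto_pi_nhds.1 hk x
  exact ⟨k, fun x => hkK x trivial,
    eVariationOn_le_of_tendsto (fun x _ => h_lim x) (hV.filter_mono hUp).frequently,
    fun x y hy => tendsto_nhds_unique (h_lim x) (hy.mono_left hUp)⟩

end Variation

section Comparison

variable {X : Type*} [TopologicalSpace X] [R1Space X] [LocallyCompactSpace X] [MeasurableSpace X]
  [BorelSpace X] {μ ν : Measure X} [IsFiniteMeasureOnCompacts μ] [IsFiniteMeasureOnCompacts ν]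

theorem measure_isCompact_le_measure_isOpen_of_integral_le
    (h : ∀ f : X → ℝ, Continuous f → HasCompactSupport f → (∀ x, 0 ≤ f x) →
      ∫ x, f x ∂μ ≤ ∫ x, f x ∂ν) {K V : Set X} (hK : IsCompact K) (hV : IsOpen V) (hKV : K ⊆ V) :
    μ K ≤ ν V := by
  obtain ⟨f, hfK, hfc, hfV, hf01⟩ := exists_continuousMap_one_of_isCompact_subset_isOpen hK hV hKV
  have h_lintegral (m : Measure X) [IsFiniteMeasureOnCompacts m] :
      ENNReal.ofReal (∫ x, f x ∂m) = ∫⁻ x, ENNReal.ofReal (f x) ∂m :=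
    ofReal_integral_eq_lintegral_ofReal (f.continuous.integrable_of_hasCompactSupport hfc)
      (ae_of_all _ fun x => (hf01 x).1)
  calc μ K ≤ ∫⁻ x, ENNReal.ofReal (f x) ∂μ :=
        meas_le_lintegral₀ (by fun_prop) fun x hx => by simp [hfK hx]
    _ ≤ ∫⁻ x, ENNReal.ofReal (f x) ∂ν := by
        rw [← h_lintegral, ← h_lintegral]
        exact ENNReal.ofReal_le_ofReal (h f f.continuous hfc fun x => (hf01 x).1)
    _ ≤ ∫⁻ x, V.indicator 1 x ∂ν := by
        refine lintegral_mono fun x => ?_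
        by_cases hx : x ∈ V
        · simpa [hx] using (hf01 x).2
        · simp [image_eq_zero_of_notMem_tsupport fun hx' => hx (hfV hx')]
    _ = ν V := lintegral_indicator_one hV.measurableSet

theorem measure_le_of_integral_le [μ.InnerRegular] [ν.OuterRegular]
    (h : ∀ f : X → ℝ, Continuous f → HasCompactSupport f → (∀ x, 0 ≤ f x) →
      ∫ x, f x ∂μ ≤ ∫ x, f x ∂ν) : μ ≤ ν := by
  refine Measure.le_iff.2 fun s hs => ?_
  rw [hs.measure_eq_iSup_isCompact, s.measure_eq_iInf_isOpen]
  exact iSup₂_le fun K hKs => iSup_le fun hK => le_iInf₂ fun V hsV => le_iInf fun hV =>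
    measure_isCompact_le_measure_isOpen_of_integral_le h hK hV (hKs.trans hsV)

end Comparison

section Mollification

theorem locallyIntegrable_toReal_rnDeriv {X : Type*} [TopologicalSpace X] [MeasurableSpace X]
    (μ ν : Measure X) [IsLocallyFiniteMeasure μ] [SFinite ν] :
    LocallyIntegrable (fun x => (μ.rnDeriv ν x).toReal) ν := fun x =>
  let ⟨s, hs, hμs⟩ := μ.finiteAt_nhds x
  ⟨s, hs, integrable_toReal_of_lintegral_ne_top (μ.measurable_rnDeriv ν).aemeasurable
    ((Measure.setLIntegral_rnDeriv_le s).trans_lt hμs).ne⟩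

theorem ae_tendsto_integral_contDiffBump_normed {G ι : Type*} [NormedAddCommGroup G]
    [NormedSpace ℝ G] [FiniteDimensional ℝ G] [MeasurableSpace G] [BorelSpace G]
    {μ ν : Measure G} [IsLocallyFiniteMeasure μ] [ν.IsAddHaarMeasure] (hμν : μ ≪ ν)
    {φ : ι → ContDiffBump (0 : G)} {l : Filter ι} {K : ℝ}
    (hφ : Tendsto (fun i => (φ i).rOut) l (𝓝 0))
    (hφK : ∀ᶠ i in l, (φ i).rOut ≤ K * (φ i).rIn) :
    ∀ᵐ x ∂ν, Tendsto (fun i => ∫ t, (φ i).normed ν (x - t) ∂μ) l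
      (𝓝 (μ.rnDeriv ν x).toReal) := by
  filter_upwards [ContDiffBump.ae_convolution_tendsto_right_of_locallyIntegrable hφ hφK
    (locallyIntegrable_toReal_rnDeriv μ ν)] with x hx
  refine hx.congr fun i => ?_
  rw [convolution_eq_swap, ← integral_rnDeriv_smul hμν]
  simp only [ContinuousLinearMap.lsmul_apply, smul_eq_mul, mul_comm]

theorem exists_seq_contDiffBump_rOut_tendsto_zero {G : Type*} [NormedAddCommGroup G] (c : G) :
    ∃ φ : ℕ → ContDiffBump c, Tendsto (fun n => (φ n).rOut) atTop (𝓝 0) ∧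
      ∀ n, (φ n).rOut ≤ 2 * (φ n).rIn :=
  ⟨fun n => ⟨1 / (n + 1), 2 * (1 / (n + 1)), by positivity,
      lt_two_mul_self (by positivity)⟩,
    by simpa using (tendsto_one_div_add_atTop_nhds_zero_nat (𝕜 := ℝ)).const_mul 2, fun _ => le_rfl⟩

end Mollification

theorem abs_intervalIntegral_le_integral {μ : Measure ℝ} {ρ : ℝ → ℝ} (hρ : Integrable ρ μ)
    (hρ0 : ∀ x, 0 ≤ ρ x) (a b : ℝ) : |∫ x in a..b, ρ x ∂μ| ≤ ∫ x, ρ x ∂μ :=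
  calc ‖∫ x in a..b, ρ x ∂μ‖
      ≤ ∫ x in uIoc a b, ‖ρ x‖ ∂μ := intervalIntegral.norm_integral_le_integral_norm_uIoc
    _ ≤ ∫ x, ‖ρ x‖ ∂μ := setIntegral_le_integral hρ.norm (ae_of_all _ fun _ => norm_nonneg _)
    _ = ∫ x, ρ x ∂μ := by simp only [Real.norm_of_nonneg (hρ0 _)]

theorem hasCompactSupport_finsetSum {X M ι : Type*} [TopologicalSpace X] [AddCommMonoid M]
    {s : Finset ι} {f : ι → X → M} (hf : ∀ i ∈ s, HasCompactSupport (f i)) :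
    HasCompactSupport fun x => ∑ i ∈ s, f i x := by
  rw [← Finset.sum_fn]
  exact Finset.sum_induction f HasCompactSupport (fun _ _ => .add) .zero hf

/-- `|∫ φ' dμ| ≤ C ‖φ‖_∞` for all `C¹` functions `φ` with compactly supported derivative, which
implies that the distributional derivative of `μ` has total variation at most `C`. As `φ` need not
vanish at `±∞`, the limits of the density there count as jumps to zero: the optimal constant of
Lebesgue measure is `2`. -/
def DerivMassLE (μ : Measure ℝ) (C : ℝ) : Prop :=
  ∀ φ : ℝ → ℝ, ContDiff ℝ 1 φ → HasCompactSupport (deriv φ) →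
    ∀ M : ℝ, (∀ x, |φ x| ≤ M) → |∫ x, deriv φ x ∂μ| ≤ C * M

namespace DerivMassLE

variable {μ : Measure ℝ} {C : ℝ}

theorem nonneg (h : DerivMassLE μ C) : 0 ≤ C := by
  have h_zero := h 0 contDiff_const (by simp [HasCompactSupport.zero]) 1 (by simp)
  simpa using (abs_nonneg _).trans h_zero

theorem abs_integral_le (h : DerivMassLE μ C) {φ ψ : ℝ → ℝ} (hφ : ∀ x, HasDerivAt φ (ψ x) x)
    (hψ : Continuous ψ) (hψc : HasCompactSupport ψ) {M : ℝ} (hM : ∀ x, |φ x| ≤ M) :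
    |∫ x, ψ x ∂μ| ≤ C * M := by
  obtain rfl : deriv φ = ψ := funext fun x => (hφ x).deriv
  exact h φ (contDiff_one_iff_deriv.2 ⟨fun x => (hφ x).differentiableAt, hψ⟩) hψc M hM

variable {ρ : ℝ → ℝ}

theorem integral_le (h : DerivMassLE μ C) (hρ : Continuous ρ) (hρc : HasCompactSupport ρ)
    (hρ0 : ∀ x, 0 ≤ ρ x) : ∫ x, ρ x ∂μ ≤ C * ∫ x, ρ x :=
  (le_abs_self _).trans <| h.abs_integral_le
    (fun x => (hρ.integral_hasStrictDerivAt 0 x).hasDerivAt) hρ hρc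
    (abs_intervalIntegral_le_integral (hρ.integrable_of_hasCompactSupport hρc) hρ0 0)

theorem le_smul_volume [IsLocallyFiniteMeasure μ] (h : DerivMassLE μ C) :
    μ ≤ C.toNNReal • volume :=
  measure_le_of_integral_le fun f hf hfc hf0 => by
    rw [integral_smul_nnreal_measure, NNReal.smul_def, Real.coe_toNNReal C h.nonneg, smul_eq_mul]
    exact h.integral_le hf hfc hf0

theorem absolutelyContinuous [IsLocallyFiniteMeasure μ] (h : DerivMassLE μ C) : μ ≪ volume :=
  (Measure.absolutelyContinuous_of_le h.le_smul_volume).trans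
    Measure.smul_absolutelyContinuous

theorem mollification_mem_Icc (h : DerivMassLE μ C) (hρ : Continuous ρ) (hρc : HasCompactSupport ρ)
    (hρ0 : ∀ x, 0 ≤ ρ x) (x : ℝ) : ∫ t, ρ (x - t) ∂μ ∈ Icc 0 (C * ∫ t, ρ t) := by
  refine ⟨integral_nonneg fun t => hρ0 (x - t), ?_⟩
  rw [← integral_sub_left_eq_self ρ volume x]
  exact h.integral_le (by fun_prop) (hρc.comp_homeomorph (Homeomorph.subLeft x))
    fun t => hρ0 (x - t)

theorem abs_integral_sum_mul_sub_le (h : DerivMassLE μ C) (hρ : Continuous ρ)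
    (hρc : HasCompactSupport ρ) (hρ0 : ∀ x, 0 ≤ ρ x) {u e : ℕ → ℝ} (hu : Monotone u)
    (he : ∀ i, |e i| ≤ 1) (n : ℕ) :
    |∫ t, ∑ i ∈ Finset.range n, e i * (ρ (u (i + 1) - t) - ρ (u i - t)) ∂μ| ≤ C * ∫ t, ρ t := by
  let P : ℝ → ℝ := fun x => ∫ t in 0..x, ρ t
  have hP (x : ℝ) : HasDerivAt P (ρ x) x := (hρ.integral_hasStrictDerivAt 0 x).hasDerivAt
  have hP_mono : Monotone P := monotone_of_hasDerivAt_nonneg hP hρ0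
  have hP_osc (a b : ℝ) : P b - P a ≤ ∫ t, ρ t := by
    rw [intervalIntegral.integral_interval_sub_left (hρ.intervalIntegrable _ _)
      (hρ.intervalIntegrable _ _)]
    exact (le_abs_self _).trans
      (abs_intervalIntegral_le_integral (hρ.integrable_of_hasCompactSupport hρc) hρ0 a b)
  let φ : ℝ → ℝ := fun t => ∑ i ∈ Finset.range n, e i * (P (u (i + 1) - t) - P (u i - t))
  let ψ : ℝ → ℝ := fun t => ∑ i ∈ Finset.range n, e i * (ρ (u (i + 1) - t) - ρ (u i - t))
  have hφ (t : ℝ) : HasDerivAt φ (-ψ t) t := by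
    refine (HasDerivAt.fun_sum fun i _ => (((hP _).comp_const_sub _ t).sub
      ((hP _).comp_const_sub _ t)).const_mul (e i)).congr_deriv ?_
    simp only [ψ, ← Finset.sum_neg_distrib]
    exact Finset.sum_congr rfl fun i _ => by ring
  have hφ_le (t : ℝ) : |φ t| ≤ ∫ t, ρ t :=
    (abs_sum_mul_sub_le_of_monotone he
      (fun i j hij => hP_mono (sub_le_sub_right (hu hij) t)) n).trans (hP_osc _ _)
  have hψc : HasCompactSupport ψ := hasCompactSupport_finsetSum fun i _ =>
    ((hρc.comp_homeomorph (.subLeft _)).sub (hρc.comp_homeomorph (.subLeft _))).mul_left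
  rw [← abs_neg, ← integral_neg]
  exact h.abs_integral_le hφ (by fun_prop) hψc.neg hφ_le

theorem eVariationOn_mollification_le [IsLocallyFiniteMeasure μ] (h : DerivMassLE μ C)
    (hρ : Continuous ρ) (hρc : HasCompactSupport ρ) (hρ0 : ∀ x, 0 ≤ ρ x) :
    eVariationOn (fun x => ∫ t, ρ (x - t) ∂μ) univ ≤ ENNReal.ofReal (C * ∫ t, ρ t) := by
  refine eVariationOn_le_ofReal_of_sum_mul_sub_le fun n u e hu _ he => ?_
  have hρ_int (a : ℝ) : Integrable (fun t => ρ (a - t)) μ :=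
    Continuous.integrable_of_hasCompactSupport (by fun_prop)
      (hρc.comp_homeomorph (Homeomorph.subLeft a))
  have h_linear :
      ∑ i ∈ Finset.range n, e i * ((∫ t, ρ (u (i + 1) - t) ∂μ) - ∫ t, ρ (u i - t) ∂μ) =
        ∫ t, ∑ i ∈ Finset.range n, e i * (ρ (u (i + 1) - t) - ρ (u i - t)) ∂μ := by
    rw [integral_finsetSum]
    · simp only [integral_const_mul, integral_sub (hρ_int _) (hρ_int _)]
    · exact fun i _ => ((hρ_int _).sub (hρ_int _)).const_mul (e i)
  rw [h_linear]
  exact (le_abs_self _).trans (h.abs_integral_sum_mul_sub_le hρ hρc hρ0 hu he n)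

end DerivMassLE

theorem stmt_18_general (μ : Measure ℝ) [IsLocallyFiniteMeasure μ] (C : ℝ)
    (h : DerivMassLE μ C) :
    μ ≪ volume ∧
    ∃ k : ℝ → ℝ, (∀ x, 0 ≤ k x) ∧ (∀ x, k x ≤ C) ∧
      eVariationOn k univ ≤ ENNReal.ofReal C ∧
      μ = volume.withDensity (fun x => ENNReal.ofReal (k x)) := by
  have hμ : μ ≪ volume := h.absolutelyContinuous
  obtain ⟨φ, hφ, hφ2⟩ := exists_seq_contDiffBump_rOut_tendsto_zero (0 : ℝ)
  let F : ℕ → ℝ → ℝ := fun n x => ∫ t, (φ n).normed volume (x - t) ∂μ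
  have hF_mem (n : ℕ) (x : ℝ) : F n x ∈ Icc 0 C := by
    simpa only [F, (φ n).integral_normed, mul_one] using
      h.mollification_mem_Icc (ρ := (φ n).normed volume) (φ n).continuous_normed
        (φ n).hasCompactSupport_normed (φ n).nonneg_normed x
  have hF_var (n : ℕ) : eVariationOn (F n) univ ≤ ENNReal.ofReal C := by
    simpa only [F, (φ n).integral_normed, mul_one] using
      h.eVariationOn_mollification_le (ρ := (φ n).normed volume) (φ n).continuous_normed
        (φ n).hasCompactSupport_normed (φ n).nonneg_normed
  obtain ⟨k, hk_mem, hk_var, hk_lim⟩ :=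
    exists_eVariationOn_le_and_eq_of_tendsto (p := atTop) isCompact_Icc
      (.of_forall hF_mem) (.of_forall hF_var)
  refine ⟨hμ, k, fun x => (hk_mem x).1, fun x => (hk_mem x).2, hk_var, ?_⟩
  rw [← Measure.withDensity_rnDeriv_eq μ volume hμ]
  refine withDensity_congr_ae ?_
  filter_upwards [μ.rnDeriv_ne_top volume,
    ae_tendsto_integral_contDiffBump_normed hμ hφ (.of_forall hφ2)] with x hx_top hx_lim
  rw [hk_lim x _ hx_lim, ENNReal.ofReal_toReal hx_top]

/-- if a finite Borel measure `μ` on `ℝ` satisfies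
`|∫ φ' dμ| ≤ C‖φ‖_∞` for all `φ ∈ C¹_b(ℝ)`, then `μ` is absolutely continuous with respect
to Lebesgue measure, with a nonnegative density `k` of bounded variation, bounded by `C`,
and with total variation at most `C`. -/
theorem stmt_18
    (μ : Measure ℝ) [IsFiniteMeasure μ]
    (C : ℝ) (hC : 0 < C)
    (hbound : ∀ φ : ℝ → ℝ, ContDiff ℝ 1 φ →
      (∃ M', ∀ x, |deriv φ x| ≤ M') →
      ∀ M : ℝ, (∀ x, |φ x| ≤ M) → |∫ x, deriv φ x ∂μ| ≤ C * M) :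
    μ ≪ volume ∧
    ∃ k : ℝ → ℝ, (∀ x, 0 ≤ k x) ∧ (∀ x, k x ≤ C) ∧
      eVariationOn k Set.univ ≤ ENNReal.ofReal C ∧
      μ = volume.withDensity (fun x => ENNReal.ofReal (k x)) :=
  stmt_18_general μ C fun φ hφ hφc =>
    hbound φ hφ (hφc.exists_bound_of_continuous (hφ.continuous_deriv le_rfl))
end
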